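/- Fix a degree n ≥ 2 and a prime ℓ, and let 𝓕 be a set of degree-n subfields of ℂ; write 𝓕(X) = {K ∈ 𝓕 : D_K ≤ X}. Suppose (i) there exist constants c, C₀ > 0 with |𝓕(X)| ≤ C₀ · X^c for all X ≥ 2, and (ii) there exists α ≥ 1 such that for arbitrarily large integers k (i.e., for every k₀ there is some k ≥ k₀) there is a constant C_k with Σ_{K ∈ 𝓕(X)} |Cl_K[ℓ]|^k ≤ C_k · |𝓕(X)|^α for all X ≥ 2. Then for every ε > 0 there exists a constant C' such that every K ∈ 𝓕 satisfies |Cl_K[ℓ]| ≤ C' · D_K^ε. -/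

import Mathlib

open NumberField
open scoped Classical

/-- The order of the `ℓ`-torsion subgroup of the class group of a number field `K`. -/
noncomputable def clTor (K : Type*) [Field K] (ℓ : ℕ) : ℕ :=
  Nat.card {c : ClassGroup (𝓞 K) // c ^ ℓ = 1}

/-- The absolute value of the discriminant of a finite extension of `ℚ` realized as a
subfield of `ℂ` (junk value `0` if the extension is infinite). -/
noncomputable def absDiscC (K : IntermediateField ℚ ℂ) : ℕ :=
  if h : FiniteDimensional ℚ K then
    haveI := h
    haveI : NumberField K := ⟨⟩
    (NumberField.discr K).natAbs
  else 0

/-!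
A single field is one term of its own moment sum: with `X = 2 D_K`, the `k`-th moment bound and the
counting bound give `|Cl_K[ℓ]| ^ k ≪ X ^ (c α)`. Taking `k`-th roots leaves the exponent `c α / k`,
and `k` may be chosen so large that this is at most `ε`. The factor `2` in `X` ensures `2 ≤ X` even
for `K = ℚ`.
-/

theorem le_finsum_mem_of_nonneg {ι M : Type*} [AddCommMonoid M] [PartialOrder M]
    [IsOrderedAddMonoid M] {s : Set ι} (hs : s.Finite) {f : ι → M} (hf : ∀ j ∈ s, 0 ≤ f j)
    {i : ι} (hi : i ∈ s) : f i ≤ ∑ᶠ j ∈ s, f j := by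
  rw [finsum_mem_eq_finite_toFinset_sum f hs]
  exact Finset.single_le_sum (fun j hj => hf j (hs.mem_toFinset.mp hj)) (hs.mem_toFinset.mpr hi)

theorem le_rpow_inv_mul_rpow_of_pow_le {a A X s ε : ℝ} {k : ℕ} (ha : 0 ≤ a) (hX : 1 ≤ X)
    (hk : k ≠ 0) (hsk : s ≤ ε * k) (h : a ^ k ≤ A * X ^ s) :
    a ≤ A ^ (k⁻¹ : ℝ) * X ^ ε := by
  have hX₀ : 0 < X := one_pos.trans_le hX
  have hA : 0 ≤ A :=
    nonneg_of_mul_nonneg_left ((pow_nonneg ha k).trans h) (Real.rpow_pos_of_pos hX₀ s)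
  calc a = (a ^ k) ^ (k⁻¹ : ℝ) := (Real.pow_rpow_inv_natCast ha hk).symm
    _ ≤ (A * (X ^ ε) ^ k) ^ (k⁻¹ : ℝ) := by
        rw [← Real.rpow_mul_natCast hX₀.le]
        gcongr
        exact h.trans (by gcongr)
    _ = A ^ (k⁻¹ : ℝ) * X ^ ε := by
        rw [Real.mul_rpow hA (by positivity), Real.pow_rpow_inv_natCast (by positivity) hk]

section Moments

variable {ι : Type*} {f : ι → ℝ} {α : ℝ}

theorem pow_le_abs_mul_rpow_of_moment_le {s : Set ι} (hs : s.Finite) (hf : ∀ j ∈ s, 0 ≤ f j)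
    (hα : 0 ≤ α) {C N : ℝ} {k : ℕ} (hcard : (Nat.card s : ℝ) ≤ N)
    (hmoment : ∑ᶠ j ∈ s, f j ^ k ≤ C * (Nat.card s : ℝ) ^ α) {i : ι} (hi : i ∈ s) :
    f i ^ k ≤ |C| * N ^ α :=
  calc f i ^ k ≤ ∑ᶠ j ∈ s, f j ^ k :=
        le_finsum_mem_of_nonneg hs (fun j hj => pow_nonneg (hf j hj) k) hi
    _ ≤ C * (Nat.card s : ℝ) ^ α := hmoment
    _ ≤ |C| * N ^ α := by
        gcongr
        exact le_abs_self C

theorem exists_forall_le_mul_rpow_of_moments {S : Set ι} {D : ι → ℝ} {c C₀ ε : ℝ}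
    (hD : ∀ i ∈ S, 1 ≤ D i) (hfin : ∀ X : ℝ, {i | i ∈ S ∧ D i ≤ X}.Finite)
    (hf : ∀ i ∈ S, 0 ≤ f i) (hα : 0 ≤ α)
    (hcount : ∀ X : ℝ, 2 ≤ X → (Nat.card {i | i ∈ S ∧ D i ≤ X} : ℝ) ≤ C₀ * X ^ c)
    (hmoments : ∀ k₀ : ℕ, ∃ k : ℕ, k₀ ≤ k ∧ ∃ Ck : ℝ, ∀ X : ℝ, 2 ≤ X →
      ∑ᶠ i ∈ {i | i ∈ S ∧ D i ≤ X}, f i ^ k ≤ Ck * (Nat.card {i | i ∈ S ∧ D i ≤ X} : ℝ) ^ α)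
    (hε : 0 < ε) : ∃ C' : ℝ, ∀ i ∈ S, f i ≤ C' * D i ^ ε := by
  obtain ⟨k, hk, Ck, hmoment⟩ := hmoments (⌈c * α / ε⌉₊ + 1)
  have hexponent : c * α ≤ ε * k := by
    rw [mul_comm ε, ← div_le_iff₀ hε]
    exact Nat.ceil_le.mp (by omega)
  have hC₀ : 0 ≤ C₀ :=
    nonneg_of_mul_nonneg_left ((Nat.cast_nonneg _).trans (hcount 2 le_rfl)) (by positivity)
  refine ⟨(|Ck| * C₀ ^ α) ^ (k⁻¹ : ℝ) * 2 ^ ε, fun i hi => ?_⟩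
  have hDi : 1 ≤ D i := hD i hi
  have hX : 2 ≤ 2 * D i := by linarith
  have hpow : f i ^ k ≤ |Ck| * C₀ ^ α * (2 * D i) ^ (c * α) :=
    calc f i ^ k ≤ |Ck| * (C₀ * (2 * D i) ^ c) ^ α :=
          pow_le_abs_mul_rpow_of_moment_le (hfin _) (fun j hj => hf j hj.1) hα (hcount _ hX)
            (hmoment _ hX) ⟨hi, by linarith⟩
      _ = |Ck| * C₀ ^ α * (2 * D i) ^ (c * α) := by
          rw [Real.mul_rpow hC₀ (by positivity), ← Real.rpow_mul (by positivity), mul_assoc]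
  calc f i ≤ (|Ck| * C₀ ^ α) ^ (k⁻¹ : ℝ) * (2 * D i) ^ ε :=
        le_rpow_inv_mul_rpow_of_pow_le (hf i hi) (by linarith) (by omega) hexponent hpow
    _ = (|Ck| * C₀ ^ α) ^ (k⁻¹ : ℝ) * 2 ^ ε * D i ^ ε := by
        rw [Real.mul_rpow two_pos.le (by positivity), mul_assoc]

end Moments

theorem absDiscC_eq_natAbs_discr (K : IntermediateField ℚ ℂ) [NumberField K] :
    absDiscC K = (discr K).natAbs :=
  dif_pos (inferInstance : FiniteDimensional ℚ K)

theorem absDiscC_pos (K : IntermediateField ℚ ℂ) [NumberField K] : 0 < absDiscC K := by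
  rw [absDiscC_eq_natAbs_discr]
  exact Int.natAbs_pos.mpr (discr_ne_zero K)

theorem finite_setOf_absDiscC_le (N : ℕ) :
    {K : IntermediateField ℚ ℂ | NumberField K ∧ absDiscC K ≤ N}.Finite := by
  refine ((finite_of_discr_bdd ℂ N).image Subtype.val).subset ?_
  rintro K ⟨hK, hdisc⟩
  rw [absDiscC_eq_natAbs_discr] at hdisc
  refine ⟨⟨K, inferInstance⟩, ?_, rfl⟩
  change |discr K| ≤ (N : ℤ)
  rw [Int.abs_eq_natAbs]
  exact_mod_cast hdisc

theorem moments_imply_pointwise_torsion_bound_general (ℓ : ℕ)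
    (𝓕 : Set (IntermediateField ℚ ℂ)) (hnf : ∀ K ∈ 𝓕, NumberField K) {c C₀ α ε : ℝ}
    (hcount : ∀ X : ℝ, 2 ≤ X →
      (Nat.card {K : IntermediateField ℚ ℂ | K ∈ 𝓕 ∧ (absDiscC K : ℝ) ≤ X} : ℝ) ≤ C₀ * X ^ c)
    (hα : 0 ≤ α)
    (hmoments : ∀ k₀ : ℕ, ∃ k : ℕ, k₀ ≤ k ∧ ∃ Ck : ℝ, ∀ X : ℝ, 2 ≤ X →
      ∑ᶠ K ∈ {K : IntermediateField ℚ ℂ | K ∈ 𝓕 ∧ (absDiscC K : ℝ) ≤ X}, (clTor K ℓ : ℝ) ^ k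
        ≤ Ck * (Nat.card {K : IntermediateField ℚ ℂ | K ∈ 𝓕 ∧ (absDiscC K : ℝ) ≤ X} : ℝ) ^ α)
    (hε : 0 < ε) :
    ∃ C' : ℝ, ∀ K ∈ 𝓕, (clTor K ℓ : ℝ) ≤ C' * (absDiscC K : ℝ) ^ ε := by
  have one_le_disc : ∀ K ∈ 𝓕, (1 : ℝ) ≤ absDiscC K := fun K hK => by
    have := hnf K hK
    exact_mod_cast absDiscC_pos K
  have finite_disc_le (X : ℝ) :
      {K : IntermediateField ℚ ℂ | K ∈ 𝓕 ∧ (absDiscC K : ℝ) ≤ X}.Finite :=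
    (finite_setOf_absDiscC_le ⌊X⌋₊).subset fun K hK => ⟨hnf K hK.1, Nat.le_floor hK.2⟩
  exact exists_forall_le_mul_rpow_of_moments one_le_disc finite_disc_le
    (fun K _ => Nat.cast_nonneg (clTor K ℓ)) hα hcount hmoments hε

/-- **Pierce–Turnage-Butterbaugh–Wood (method of moments).** Fix `n ≥ 2`, a prime `ℓ`, and
a family `𝓕` of degree-`n` subfields of `ℂ`; write `𝓕(X) = {K ∈ 𝓕 : D_K ≤ X}`. Suppose
(i) there are constants `c, C₀ > 0` with `|𝓕(X)| ≤ C₀·X^c` for all `X ≥ 2`, and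
(ii) there is `α ≥ 1` such that for arbitrarily large integers `k` there is a constant
`C_k` with `Σ_{K ∈ 𝓕(X)} |Cl_K[ℓ]|^k ≤ C_k·|𝓕(X)|^α` for all `X ≥ 2`. Then for every
`ε > 0` there is a constant `C'` with `|Cl_K[ℓ]| ≤ C'·D_K^ε` for every `K ∈ 𝓕`. -/
theorem moments_imply_pointwise_torsion_bound (n : ℕ) (hn : 2 ≤ n) (ℓ : ℕ)
    (hℓ : ℓ.Prime) (𝓕 : Set (IntermediateField ℚ ℂ))
    (hdeg : ∀ K ∈ 𝓕, Module.finrank ℚ K = n)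
    (hcount : ∃ c : ℝ, 0 < c ∧ ∃ C₀ : ℝ, 0 < C₀ ∧ ∀ X : ℝ, 2 ≤ X →
      (Nat.card {K : IntermediateField ℚ ℂ | K ∈ 𝓕 ∧ (absDiscC K : ℝ) ≤ X} : ℝ)
        ≤ C₀ * X ^ c)
    (hmoments : ∃ α : ℝ, 1 ≤ α ∧ ∀ k₀ : ℕ, ∃ k : ℕ, k₀ ≤ k ∧ ∃ Ck : ℝ,
      ∀ X : ℝ, 2 ≤ X →
        (∑ᶠ K ∈ {K : IntermediateField ℚ ℂ | K ∈ 𝓕 ∧ (absDiscC K : ℝ) ≤ X},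
            (clTor K ℓ : ℝ) ^ k)
          ≤ Ck * (Nat.card
              {K : IntermediateField ℚ ℂ | K ∈ 𝓕 ∧ (absDiscC K : ℝ) ≤ X} : ℝ) ^ α) :
    ∀ ε : ℝ, 0 < ε → ∃ C' : ℝ, ∀ K ∈ 𝓕,
      (clTor K ℓ : ℝ) ≤ C' * (absDiscC K : ℝ) ^ ε := by
  intro ε hε
  obtain ⟨c, -, C₀, -, hcount⟩ := hcount
  obtain ⟨α, hα, hmoments⟩ := hmoments
  have hnf (K) (hK : K ∈ 𝓕) : NumberField K :=
    { to_finiteDimensional := Module.finite_of_finrank_pos (by rw [hdeg K hK]; omega) }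
  exact moments_imply_pointwise_torsion_bound_general ℓ 𝓕 hnf hcount (by linarith) hmoments hε
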